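/- Let f : ℝ² → ℝ be of class C² satisfying (i) D²f(p)(q,q) > 0 for all p, q ∈ ℝ² with q ≠ 0, and (ii) there is a constant Λ > 0 with |D²f(p)| ≤ Λ/(1+|p|) for all p ∈ ℝ². Let ρ : [1,∞) → (0,∞) be of class C¹ with ρ'(t) > 0 and (d/dt)[ρ(t)/√t] ≤ 0 for all t ≥ 1. Let u ∈ C²(ℝ²) be an entire solution of div[Df(∇u)] = 0 such that sup_{R>0} R^{−2} ∫_{B_R} Γ₁^{−1} · ρ²(Γ₁)/ρ'(Γ₁) dx < ∞, where Γ₁ := 1 + |∂₁u|² and B_R is the disc of radius R centered at the origin. Then u is an affine function. -/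

import Mathlib

open Real MeasureTheory Metric
open scoped ENNReal

noncomputable section

/-- `ℝ²` with its Euclidean structure. -/
abbrev E2 : Type := EuclideanSpace ℝ (Fin 2)

/-- The `i`-th standard basis vector of `ℝ²`. -/
def ee (i : Fin 2) : E2 := EuclideanSpace.single i 1

/-- The Hessian bilinear form `D²f(p)(q,q)`. -/
def Hess (f : E2 → ℝ) (p q : E2) : ℝ := iteratedFDeriv ℝ 2 f p ![q, q]

/-- The partial derivative `∂ᵢu(x)`. -/
def pd (u : E2 → ℝ) (i : Fin 2) (x : E2) : ℝ := fderiv ℝ u x (ee i)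

/-- The equation `div [Df(∇u)] = 0`, i.e. `∑ i, ∂ᵢ[(∂f/∂pᵢ)(∇u(x))] = 0` on `ℝ²`. -/
def solves (f u : E2 → ℝ) : Prop :=
  ∀ x : E2, ∑ i : Fin 2, fderiv ℝ (fun y => fderiv ℝ f (gradient u y) (ee i)) x (ee i) = 0

/-!
The partial derivative `w = ∂₁u` is a weak solution of the linearised equation
`div (D²f(∇u) ∇w) = 0`. Test it with `η² Φ(w)`, where `η` is a cutoff between `B_R` and `B_{2R}`
and `Φ(s) = s ρ(Γ) / √Γ` with `Γ = 1 + s²`. Since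
`Φ'(s) = 2 √Γ ρ'(Γ) - 2 (ρ/√·)'(Γ) ≥ 2 √Γ ρ'(Γ)`, the decay of `D²f` turns `Φ(w)² / Φ'(w) D²f(∇u)`
into a multiple of the integrand `Γ₁⁻¹ ρ²(Γ₁) / ρ'(Γ₁)`, whose quadratic growth is exactly
compensated by `|∇η|² ≲ R⁻²`. Caccioppoli's inequality then bounds the energy
`∫_{B_R} Φ'(w) D²f(∇u)(∇w, ∇w)` uniformly in `R`. Hence the energy of the annuli `B_{2R} \ B_R`
tends to `0` along dyadic radii, and as the right-hand side of Caccioppoli's inequality only sees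
the annulus, the energy vanishes. So `∇∂₁u = 0`, and the equation, which is now
`D²f(∇u)(e₂, e₂) ∂₂₂u = 0`, kills the remaining second derivative.
-/

open scoped Gradient InnerProductSpace

section Cutoff

variable {E : Type*} [NormedAddCommGroup E] [NormedSpace ℝ E] {C R : ℝ} {η : E → ℝ} {x : E}

/-- `η` is a `C¹` cutoff function between the balls of radii `R` and `2 R` about the origin, with
slope at most `C / R`. -/
structure IsCutoff (C R : ℝ) (η : E → ℝ) : Prop where
  contDiff : ContDiff ℝ 1 η
  nonneg : ∀ x, 0 ≤ η x
  le_one : ∀ x, η x ≤ 1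
  eq_one : ∀ x ∈ ball 0 R, η x = 1
  eq_zero : ∀ x ∉ ball 0 (2 * R), η x = 0
  norm_fderiv_le : ∀ x, ‖fderiv ℝ η x‖ ≤ C / R

namespace IsCutoff

lemma hasCompactSupport [ProperSpace E] (h : IsCutoff C R η) : HasCompactSupport η :=
  HasCompactSupport.intro (isCompact_closedBall 0 (2 * R)) fun x hx =>
    h.eq_zero x fun hx' => hx (ball_subset_closedBall hx')

lemma fderiv_eq_zero_of_mem_ball (h : IsCutoff C R η) (hx : x ∈ ball 0 R) :
    fderiv ℝ η x = 0 :=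
  IsLocalMax.fderiv_eq_zero <| .of_forall fun y => (h.le_one y).trans (h.eq_one x hx).ge

lemma fderiv_eq_zero_of_notMem_ball (h : IsCutoff C R η) (hx : x ∉ ball 0 (2 * R)) :
    fderiv ℝ η x = 0 :=
  IsLocalMin.fderiv_eq_zero <| .of_forall fun y => (h.eq_zero x hx).trans_le (h.nonneg y)

end IsCutoff

lemma exists_forall_isCutoff [FiniteDimensional ℝ E] :
    ∃ C : ℝ, ∀ R > 0, ∃ η : E → ℝ, IsCutoff C R η := by
  let φ : ContDiffBump (0 : E) := ⟨1, 2, one_pos, one_lt_two⟩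
  have hφ : ContDiff ℝ 1 φ := φ.contDiff
  obtain ⟨C, hC⟩ := (φ.hasCompactSupport.fderiv ℝ).exists_bound_of_continuous
    (hφ.continuous_fderiv one_ne_zero)
  refine ⟨C, fun R hR => ⟨fun x => φ (R⁻¹ • x), ?_⟩⟩
  have norm_inv_smul (x : E) : ‖R⁻¹ • x‖ = R⁻¹ * ‖x‖ := by
    rw [norm_smul, norm_inv, Real.norm_of_nonneg hR.le]
  refine ⟨by fun_prop, fun _ => φ.nonneg, fun _ => φ.le_one, fun x hx => ?_, fun x hx => ?_,
    fun x => ?_⟩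
  · rw [mem_ball_zero_iff] at hx
    refine φ.one_of_mem_closedBall (mem_closedBall_zero_iff.2 ?_)
    rw [norm_inv_smul, inv_mul_le_iff₀ hR]
    simpa [φ] using hx.le
  · rw [mem_ball_zero_iff, not_lt] at hx
    refine φ.zero_of_le_dist ?_
    rw [dist_zero_right, norm_inv_smul, le_inv_mul_iff₀ hR]
    simpa [φ, mul_comm] using hx
  · rw [show fderiv ℝ (fun x => φ (R⁻¹ • x)) x = R⁻¹ • fderiv ℝ φ (R⁻¹ • x) from
      fderiv_comp_smul _, norm_smul, norm_inv, Real.norm_of_nonneg hR.le, div_eq_inv_mul]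
    gcongr
    exact hC _

end Cutoff

section DivergenceFree

variable {E : Type*} [NormedAddCommGroup E] [NormedSpace ℝ E] [MeasurableSpace E]
  [BorelSpace E] {μ : Measure E}

lemma hasDerivAt_integral_translate_mul [IsFiniteMeasureOnCompacts μ] {v g : E → ℝ}
    (hv : ContDiff ℝ 1 v) (hg : Continuous g) (hgc : HasCompactSupport g) (e : E) :
    HasDerivAt (fun t : ℝ => ∫ x, v (x + t • e) * g x ∂μ) (∫ x, fderiv ℝ v x e * g x ∂μ) 0 := by
  have hv₀ : Continuous v := hv.continuous
  have translates_isCompact :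
      IsCompact ((fun z : E × ℝ => z.1 + z.2 • e) '' (tsupport g ×ˢ closedBall 0 1)) :=
    (IsCompact.prod hgc (isCompact_closedBall _ _)).image (by fun_prop)
  obtain ⟨C, hC⟩ := translates_isCompact.exists_bound_of_continuousOn
    (f := fun y => fderiv ℝ v y e) (by fun_prop)
  have hbound : ∀ x, ∀ t ∈ ball (0 : ℝ) 1, ‖fderiv ℝ v (x + t • e) e * g x‖ ≤ C * ‖g x‖ := by
    intro x t ht
    rw [norm_mul]
    by_cases hx : x ∈ tsupport g
    · gcongr
      exact hC _ ⟨(x, t), ⟨hx, ball_subset_closedBall ht⟩, rfl⟩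
    · simp [image_eq_zero_of_notMem_tsupport hx]
  have hderiv : ∀ x, ∀ t ∈ ball (0 : ℝ) 1,
      HasDerivAt (fun t : ℝ => v (x + t • e) * g x) (fderiv ℝ v (x + t • e) e * g x) t := by
    intro x t _
    have hline : HasDerivAt (fun t : ℝ => x + t • e) e t := by
      simpa using ((hasDerivAt_id t).smul_const e).const_add x
    exact ((hv.differentiable one_ne_zero _).hasFDerivAt.comp_hasDerivAt t hline).mul_const (g x)
  have key := hasDerivAt_integral_of_dominated_loc_of_deriv_le (μ := μ)
    (F := fun t x => v (x + t • e) * g x) (ball_mem_nhds (0 : ℝ) one_pos)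
    (.of_forall fun t => Continuous.aestronglyMeasurable (by fun_prop))
    (Continuous.integrable_of_hasCompactSupport (by fun_prop) hgc.mul_left)
    (Continuous.aestronglyMeasurable (by fun_prop)) (.of_forall hbound)
    (Continuous.integrable_of_hasCompactSupport (by fun_prop) hgc.norm.mul_left)
    (.of_forall hderiv)
  simpa using key.2

variable [FiniteDimensional ℝ E] [μ.IsAddHaarMeasure] {ι : Type*} [Fintype ι] {b : ι → E}
  {v : ι → E → ℝ} {ψ : E → ℝ}

lemma integral_sum_mul_fderiv_eq_zero (hv : ∀ i, ContDiff ℝ 1 (v i))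
    (hdiv : ∀ x, ∑ i, fderiv ℝ (v i) x (b i) = 0) (hψ : ContDiff ℝ 1 ψ)
    (hψc : HasCompactSupport ψ) :
    ∫ x, ∑ i, v i x * fderiv ℝ ψ x (b i) ∂μ = 0 := by
  have hv₀ i : Continuous (v i) := (hv i).continuous
  have hψ₀ : Continuous ψ := hψ.continuous
  have hvψ' i : Integrable (fun x => v i x * fderiv ℝ ψ x (b i)) μ :=
    Continuous.integrable_of_hasCompactSupport (by fun_prop) (hψc.fderiv_apply ℝ (b i)).mul_left
  have hv'ψ i : Integrable (fun x => fderiv ℝ (v i) x (b i) * ψ x) μ :=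
    Continuous.integrable_of_hasCompactSupport (by fun_prop) hψc.mul_left
  calc ∫ x, ∑ i, v i x * fderiv ℝ ψ x (b i) ∂μ
      = ∑ i, ∫ x, v i x * fderiv ℝ ψ x (b i) ∂μ := integral_finsetSum _ fun i _ => hvψ' i
    _ = ∑ i, -∫ x, fderiv ℝ (v i) x (b i) * ψ x ∂μ := Finset.sum_congr rfl fun i _ =>
        integral_mul_fderiv_eq_neg_fderiv_mul_of_integrable (hv'ψ i) (hvψ' i)
          (Continuous.integrable_of_hasCompactSupport (by fun_prop) hψc.mul_left)
          (fun x _ => (hv i).differentiable one_ne_zero x)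
          (fun x _ => hψ.differentiable one_ne_zero x)
    _ = -∫ x, (∑ i, fderiv ℝ (v i) x (b i)) * ψ x ∂μ := by
        simp only [Finset.sum_neg_distrib, Finset.sum_mul, integral_finsetSum _ fun i _ => hv'ψ i]
    _ = 0 := by simp [hdiv]

/-- For a test function that is only `C¹` one cannot move both derivatives onto it; instead, the
weak divergence of the translates of `v` along `e` is differentiated. -/
lemma integral_sum_fderiv_mul_fderiv_eq_zero (hv : ∀ i, ContDiff ℝ 1 (v i))
    (hdiv : ∀ x, ∑ i, fderiv ℝ (v i) x (b i) = 0) (hψ : ContDiff ℝ 1 ψ)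
    (hψc : HasCompactSupport ψ) (e : E) :
    ∫ x, ∑ i, fderiv ℝ (v i) x e * fderiv ℝ ψ x (b i) ∂μ = 0 := by
  have hv₀ i : Continuous (v i) := (hv i).continuous
  have hψc' i : HasCompactSupport fun x => fderiv ℝ ψ x (b i) := hψc.fderiv_apply ℝ (b i)
  have translate_eq_zero (t : ℝ) : ∑ i, ∫ x, v i (x + t • e) * fderiv ℝ ψ x (b i) ∂μ = 0 := by
    have hint i : Integrable (fun x => v i (x + t • e) * fderiv ℝ ψ x (b i)) μ :=
      Continuous.integrable_of_hasCompactSupport (by fun_prop) (hψc' i).mul_left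
    rw [← integral_finsetSum _ fun i _ => hint i]
    refine integral_sum_mul_fderiv_eq_zero (v := fun i x => v i (x + t • e)) (fun i => by fun_prop)
      (fun x => ?_) hψ hψc
    simpa only [fderiv_comp_add_right] using hdiv (x + t • e)
  have hderiv : HasDerivAt (fun t : ℝ => ∑ i, ∫ x, v i (x + t • e) * fderiv ℝ ψ x (b i) ∂μ)
      (∑ i, ∫ x, fderiv ℝ (v i) x e * fderiv ℝ ψ x (b i) ∂μ) 0 :=
    HasDerivAt.fun_sum fun i _ =>
      hasDerivAt_integral_translate_mul (hv i) (by fun_prop) (hψc' i) e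
  have hint i : Integrable (fun x => fderiv ℝ (v i) x e * fderiv ℝ ψ x (b i)) μ :=
    Continuous.integrable_of_hasCompactSupport (by fun_prop) (hψc' i).mul_left
  rw [integral_finsetSum _ fun i _ => hint i]
  simp_rw [translate_eq_zero] at hderiv
  exact hderiv.unique (hasDerivAt_const _ _)

end DivergenceFree

section Gradient

variable {E : Type*} [NormedAddCommGroup E]

/-- The directional derivative `∂ₑu` as a function of the point; `pd u i` is `dirDeriv u (ee i)`. -/
abbrev dirDeriv [NormedSpace ℝ E] (u : E → ℝ) (e x : E) : ℝ := fderiv ℝ u x e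

/-- The Hessian of `f` at `p` as a continuous bilinear form; `Hess f p` is its quadratic form. -/
abbrev hessian [NormedSpace ℝ E] (f : E → ℝ) (p : E) : E →L[ℝ] E →L[ℝ] ℝ :=
  fderiv ℝ (fderiv ℝ f) p

lemma hessian_symm [NormedSpace ℝ E] {f : E → ℝ} (hf : ContDiff ℝ 2 f) (x p q : E) :
    hessian f x p q = hessian f x q p :=
  (hf.contDiffAt.isSymmSndFDerivAt (by simp)).eq p q

lemma contDiff_dirDeriv [NormedSpace ℝ E] {u : E → ℝ} (hu : ContDiff ℝ 2 u) (e : E) :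
    ContDiff ℝ 1 (dirDeriv u e) :=
  (hu.fderiv_right le_rfl).clm_apply contDiff_const

lemma fderiv_dirDeriv [NormedSpace ℝ E] {u : E → ℝ} (hu : ContDiff ℝ 2 u) (e x p : E) :
    fderiv ℝ (dirDeriv u e) x p = hessian u x p e := by
  have hu₁ : ContDiff ℝ 1 (fderiv ℝ u) := hu.fderiv_right le_rfl
  rw [fderiv_clm_apply (hu₁.differentiable one_ne_zero x) (by fun_prop)]
  simp

variable [InnerProductSpace ℝ E] [CompleteSpace E] {f u : E → ℝ}

lemma contDiff_gradient {m n : WithTop ℕ∞} (hu : ContDiff ℝ n u) (hmn : m + 1 ≤ n) :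
    ContDiff ℝ m (∇ u) :=
  (InnerProductSpace.toDual ℝ E : E ≃ₗᵢ[ℝ] StrongDual ℝ E).symm.contDiff.comp
    (hu.fderiv_right hmn)

lemma norm_gradient (u : E → ℝ) (x : E) : ‖∇ u x‖ = ‖fderiv ℝ u x‖ :=
  (InnerProductSpace.toDual ℝ E).symm.norm_map _

lemma inner_gradient_dirDeriv (hu : ContDiff ℝ 2 u) (e x q : E) :
    ⟪∇ (dirDeriv u e) x, q⟫_ℝ = hessian u x e q := by
  rw [inner_gradient_left, fderiv_dirDeriv hu, hessian_symm hu]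

lemma fderiv_gradient_apply (hu : ContDiff ℝ 2 u) (x e : E) :
    fderiv ℝ (∇ u) x e = ∇ (dirDeriv u e) x := by
  have hgrad : DifferentiableAt ℝ (∇ u) x :=
    (contDiff_gradient hu (m := 1) le_rfl).differentiable one_ne_zero x
  refine ext_inner_right ℝ fun q => ?_
  calc ⟪fderiv ℝ (∇ u) x e, q⟫_ℝ = fderiv ℝ (fun y => ⟪∇ u y, q⟫_ℝ) x e := by
        rw [fderiv_inner_apply ℝ hgrad (by fun_prop)]
        simp
    _ = fderiv ℝ (dirDeriv u q) x e := by simp only [inner_gradient_left]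
    _ = ⟪∇ (dirDeriv u e) x, q⟫_ℝ := by
        rw [fderiv_dirDeriv hu, inner_gradient_dirDeriv hu]

lemma fderiv_fderiv_gradient_apply (hf : ContDiff ℝ 2 f) (hu : ContDiff ℝ 2 u) (p x e : E) :
    fderiv ℝ (fun y => fderiv ℝ f (∇ u y) p) x e
      = hessian f (∇ u x) (∇ (dirDeriv u e) x) p := by
  have hgrad : DifferentiableAt ℝ (∇ u) x :=
    (contDiff_gradient hu (m := 1) le_rfl).differentiable one_ne_zero x
  have hfp : DifferentiableAt ℝ (dirDeriv f p) (∇ u x) :=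
    (contDiff_dirDeriv hf p).differentiable one_ne_zero _
  rw [show (fun y => fderiv ℝ f (∇ u y) p) = dirDeriv f p ∘ ∇ u from rfl,
    fderiv_comp x hfp hgrad, ContinuousLinearMap.comp_apply, fderiv_dirDeriv hf,
    fderiv_gradient_apply hu]

lemma gradient_sq_mul_comp {η w : E → ℝ} {Φ : ℝ → ℝ} {x : E} (hη : DifferentiableAt ℝ η x)
    (hw : DifferentiableAt ℝ w x) (hΦ : DifferentiableAt ℝ Φ (w x)) :
    ∇ (fun x => η x ^ 2 * Φ (w x)) x
      = (2 * η x * Φ (w x)) • ∇ η x + (η x ^ 2 * deriv Φ (w x)) • ∇ w x := by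
  have h := (hη.hasFDerivAt.pow 2).mul (hΦ.hasDerivAt.comp_hasFDerivAt x hw.hasFDerivAt)
  refine ext_inner_right ℝ fun q => ?_
  rw [inner_add_left, real_inner_smul_left, real_inner_smul_left]
  simp only [inner_gradient_left]
  refine (DFunLike.congr_fun h.fderiv q).trans ?_
  simp only [Function.comp_apply, Nat.add_one_sub_one, pow_one, nsmul_eq_mul, Nat.cast_ofNat,
    add_apply, smul_apply, smul_eq_mul]
  ring

end Gradient

section Liouville

variable {E : Type*} [NormedAddCommGroup E] [InnerProductSpace ℝ E]

/-- The coefficient field `A` of a degenerate elliptic operator `w ↦ div (A ∇w)`, given at each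
point by a bilinear form. -/
structure IsDegenerateElliptic (A : E → E →L[ℝ] E →L[ℝ] ℝ) : Prop where
  continuous : Continuous A
  symm : ∀ x p q, A x p q = A x q p
  nonneg : ∀ x p, 0 ≤ A x p p

lemma IsDegenerateElliptic.neg_two_mul_le {A : E → E →L[ℝ] E →L[ℝ] ℝ}
    (hA : IsDegenerateElliptic A) (x p q : E) (a b : ℝ) {d t : ℝ} (hd : 0 < d) (ht : 0 < t) :
    -(2 * a * b * A x p q) ≤ t * (a ^ 2 * (d * A x p p)) + b ^ 2 / d * A x q q / t := by
  have hsq : A x ((t * a * d) • p + b • q) ((t * a * d) • p + b • q)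
      = (t * d) * (t * (a ^ 2 * (d * A x p p)) + b ^ 2 / d * A x q q / t
        + 2 * a * b * A x p q) := by
    simp only [map_add, map_smul, add_apply, smul_apply, smul_eq_mul, hA.symm x q p]
    field_simp
    ring
  have hnonneg := nonneg_of_mul_nonneg_right (hsq ▸ hA.nonneg x _) (mul_pos ht hd)
  linarith

/-- The energy density of `w` for the operator `div (A ∇ ·)`, weighted by `Φ'(w)`: it is what
testing the equation with `η² Φ(w)` produces. -/
def energyDensity [CompleteSpace E] (A : E → E →L[ℝ] E →L[ℝ] ℝ) (Φ : ℝ → ℝ) (w : E → ℝ) (x : E) :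
    ℝ :=
  deriv Φ (w x) * A x (∇ w x) (∇ w x)

/-- The cross term `2 η Φ(w) A(∇w, ∇η)` which testing the equation with `η² Φ(w)` produces. -/
def crossTerm [CompleteSpace E] (A : E → E →L[ℝ] E →L[ℝ] ℝ) (Φ : ℝ → ℝ) (w η : E → ℝ) (x : E) :
    ℝ :=
  2 * η x * Φ (w x) * A x (∇ w x) (∇ η x)

/-- `w` solves `div (A ∇w) = 0` weakly, tested against compactly supported `C¹` functions. -/
def IsWeakSolution [CompleteSpace E] [MeasurableSpace E] (μ : Measure E)
    (A : E → E →L[ℝ] E →L[ℝ] ℝ) (w : E → ℝ) : Prop :=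
  ∀ ψ : E → ℝ, ContDiff ℝ 1 ψ → HasCompactSupport ψ → ∫ x, A x (∇ w x) (∇ ψ x) ∂μ = 0

/-- `g` dominates the quadratic form `Φ(w)² / Φ'(w) A`, and its integrals over balls grow at most
quadratically, with constant `K`. -/
structure IsQuadraticMajorant [MeasurableSpace E] (μ : Measure E) (A : E → E →L[ℝ] E →L[ℝ] ℝ)
    (Φ : ℝ → ℝ) (w g : E → ℝ) (K : ℝ) : Prop where
  locallyIntegrable : LocallyIntegrable g μ
  nonneg : ∀ x, 0 ≤ g x
  sq_div_mul_le : ∀ x q, Φ (w x) ^ 2 / deriv Φ (w x) * A x q q ≤ g x * ‖q‖ ^ 2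
  setIntegral_ball_le : ∀ R > 0, ∫ x in ball 0 R, g x ∂μ ≤ K * R ^ 2

variable [FiniteDimensional ℝ E] {A : E → E →L[ℝ] E →L[ℝ] ℝ} {Φ : ℝ → ℝ} {w η g : E → ℝ}
  {C K R t : ℝ}

lemma energyDensity_nonneg (hA : IsDegenerateElliptic A) (hΦ' : ∀ s, 0 < deriv Φ s) (x : E) :
    0 ≤ energyDensity A Φ w x :=
  mul_nonneg (hΦ' _).le (hA.nonneg _ _)

lemma continuous_energyDensity (hA : IsDegenerateElliptic A) (hΦ : ContDiff ℝ 1 Φ)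
    (hw : ContDiff ℝ 1 w) : Continuous (energyDensity A Φ w) := by
  have hA₀ := hA.continuous
  have hw₀ := hw.continuous
  have hw₁ : Continuous (∇ w) := (contDiff_gradient hw (zero_add 1).le).continuous
  unfold energyDensity
  fun_prop

lemma IsCutoff.gradient_eq_zero_of_notMem_annulus (h : IsCutoff C R η) {x : E}
    (hx : x ∉ ball 0 (2 * R) \ ball 0 R) : ∇ η x = 0 := by
  rw [← norm_eq_zero, norm_gradient, norm_eq_zero]
  by_cases hxR : x ∈ ball 0 R
  · exact h.fderiv_eq_zero_of_mem_ball hxR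
  · exact h.fderiv_eq_zero_of_notMem_ball fun hx' => hx ⟨hx', hxR⟩

lemma crossTerm_eq_zero_of_notMem_annulus (hη : IsCutoff C R η) {x : E}
    (hx : x ∉ ball 0 (2 * R) \ ball 0 R) : crossTerm A Φ w η x = 0 := by
  simp [crossTerm, hη.gradient_eq_zero_of_notMem_annulus hx]

variable [MeasurableSpace E] {μ : Measure E}

lemma IsQuadraticMajorant.neg_crossTerm_le (hg : IsQuadraticMajorant μ A Φ w g K)
    (hA : IsDegenerateElliptic A) (hΦ' : ∀ s, 0 < deriv Φ s) (ht : 0 < t) (x : E) :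
    -crossTerm A Φ w η x ≤ t * (η x ^ 2 * energyDensity A Φ w x) + g x * ‖∇ η x‖ ^ 2 / t :=
  (hA.neg_two_mul_le x _ _ _ _ (hΦ' (w x)) ht).trans <|
    add_le_add le_rfl (div_le_div_of_nonneg_right (hg.sq_div_mul_le x _) ht.le)

variable [BorelSpace E]

lemma IsQuadraticMajorant.integrable_mul_norm_gradient_sq (hg : IsQuadraticMajorant μ A Φ w g K)
    (hη : IsCutoff C R η) : Integrable (fun x => g x * ‖∇ η x‖ ^ 2) μ := by
  have hη₁ : Continuous (∇ η) := (contDiff_gradient hη.contDiff (zero_add 1).le).continuous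
  have hηc : HasCompactSupport fun x => ‖∇ η x‖ ^ 2 :=
    HasCompactSupport.intro (isCompact_closedBall 0 (2 * R)) fun x hx => by
      simp [hη.gradient_eq_zero_of_notMem_annulus fun hx' => hx (ball_subset_closedBall hx'.1)]
  simpa only [smul_eq_mul, mul_comm] using
    hg.locallyIntegrable.integrable_smul_left_of_hasCompactSupport (by fun_prop) hηc

/-- The quadratic growth of `g` exactly compensates the decay `R⁻²` of `‖∇η‖²`. -/
lemma IsQuadraticMajorant.setIntegral_annulus_le (hg : IsQuadraticMajorant μ A Φ w g K)
    (hR : 0 < R) (hη : IsCutoff C R η) :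
    ∫ x in ball 0 (2 * R) \ ball 0 R, g x * ‖∇ η x‖ ^ 2 ∂μ ≤ 4 * (C ^ 2 * K) := by
  have hgη := hg.integrable_mul_norm_gradient_sq hη
  have hgball : IntegrableOn g (ball 0 (2 * R)) μ :=
    (hg.locallyIntegrable.integrableOn_isCompact (isCompact_closedBall 0 _)).mono_set
      ball_subset_closedBall
  calc ∫ x in ball 0 (2 * R) \ ball 0 R, g x * ‖∇ η x‖ ^ 2 ∂μ
      ≤ ∫ x in ball 0 (2 * R), g x * ‖∇ η x‖ ^ 2 ∂μ :=
        setIntegral_mono_set hgη.integrableOn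
          (.of_forall fun x => mul_nonneg (hg.nonneg x) (sq_nonneg _)) Set.sdiff_subset.eventuallyLE
    _ ≤ ∫ x in ball 0 (2 * R), g x * (C / R) ^ 2 ∂μ := by
        refine setIntegral_mono hgη.integrableOn (hgball.mul_const _) fun x => ?_
        have := hg.nonneg x
        have := norm_gradient η x ▸ hη.norm_fderiv_le x
        dsimp only
        gcongr
    _ = (∫ x in ball 0 (2 * R), g x ∂μ) * (C / R) ^ 2 := integral_mul_const _ _
    _ ≤ K * (2 * R) ^ 2 * (C / R) ^ 2 := by
        gcongr
        exact hg.setIntegral_ball_le _ (by positivity)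
    _ = 4 * (C ^ 2 * K) := by
        field_simp
        ring

variable [IsFiniteMeasureOnCompacts μ]

lemma integrableOn_ball_energyDensity (hA : IsDegenerateElliptic A) (hΦ : ContDiff ℝ 1 Φ)
    (hw : ContDiff ℝ 1 w) (R : ℝ) : IntegrableOn (energyDensity A Φ w) (ball 0 R) μ :=
  ((continuous_energyDensity hA hΦ hw).locallyIntegrable.integrableOn_isCompact
    (isCompact_closedBall 0 R)).mono_set ball_subset_closedBall

lemma integrable_sq_mul_energyDensity (hA : IsDegenerateElliptic A) (hΦ : ContDiff ℝ 1 Φ)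
    (hw : ContDiff ℝ 1 w) (hη : IsCutoff C R η) :
    Integrable (fun x => η x ^ 2 * energyDensity A Φ w x) μ :=
  ((hη.contDiff.continuous.pow 2).mul
    (continuous_energyDensity hA hΦ hw)).integrable_of_hasCompactSupport
    (hη.hasCompactSupport.comp_left (zero_pow two_ne_zero)).mul_right

lemma integrable_crossTerm (hA : IsDegenerateElliptic A) (hΦ : ContDiff ℝ 1 Φ)
    (hw : ContDiff ℝ 1 w) (hη : IsCutoff C R η) : Integrable (crossTerm A Φ w η) μ := by
  have hA₀ := hA.continuous
  have hΦ₀ := hΦ.continuous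
  have hw₀ := hw.continuous
  have hη₀ := hη.contDiff.continuous
  have hw₁ : Continuous (∇ w) := (contDiff_gradient hw (zero_add 1).le).continuous
  have hη₁ : Continuous (∇ η) := (contDiff_gradient hη.contDiff (zero_add 1).le).continuous
  refine Continuous.integrable_of_hasCompactSupport (by unfold crossTerm; fun_prop) ?_
  exact hη.hasCompactSupport.mono' fun x hx => subset_tsupport _ fun hηx => hx (by
    simp [crossTerm, hηx])

lemma IsWeakSolution.integral_sq_mul_energyDensity (hw' : IsWeakSolution μ A w)
    (hA : IsDegenerateElliptic A) (hΦ : ContDiff ℝ 1 Φ) (hw : ContDiff ℝ 1 w)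
    (hη : IsCutoff C R η) :
    ∫ x, η x ^ 2 * energyDensity A Φ w x ∂μ = ∫ x, -crossTerm A Φ w η x ∂μ := by
  have hη₁ : ContDiff ℝ 1 η := hη.contDiff
  have hψ : ContDiff ℝ 1 fun x => η x ^ 2 * Φ (w x) := by fun_prop
  have hψc : HasCompactSupport fun x => η x ^ 2 * Φ (w x) := by
    simp_rw [pow_two, mul_assoc]
    exact hη.hasCompactSupport.mul_right
  have htest : ∀ x, A x (∇ w x) (∇ (fun x => η x ^ 2 * Φ (w x)) x)
      = crossTerm A Φ w η x + η x ^ 2 * energyDensity A Φ w x := by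
    intro x
    rw [gradient_sq_mul_comp (hη₁.differentiable one_ne_zero x) (hw.differentiable one_ne_zero x)
      (hΦ.differentiable one_ne_zero _)]
    simp only [map_add, map_smul, smul_eq_mul, crossTerm, energyDensity]
    ring
  have hzero := hw' _ hψ hψc
  simp_rw [htest] at hzero
  rw [integral_add (integrable_crossTerm hA hΦ hw hη)
    (integrable_sq_mul_energyDensity hA hΦ hw hη)] at hzero
  rw [integral_neg]
  linarith

/-- Caccioppoli's inequality. As `∇η` vanishes off the annulus, so does the energy on the right:
this is what makes the hole filling possible. -/
lemma IsWeakSolution.integral_sq_mul_energyDensity_le (hw' : IsWeakSolution μ A w)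
    (hA : IsDegenerateElliptic A) (hΦ : ContDiff ℝ 1 Φ) (hΦ' : ∀ s, 0 < deriv Φ s)
    (hw : ContDiff ℝ 1 w) (hg : IsQuadraticMajorant μ A Φ w g K) (hR : 0 < R)
    (hη : IsCutoff C R η) (ht : 0 < t) :
    ∫ x, η x ^ 2 * energyDensity A Φ w x ∂μ
      ≤ t * ∫ x in ball 0 (2 * R) \ ball 0 R, η x ^ 2 * energyDensity A Φ w x ∂μ
        + 4 * (C ^ 2 * K) / t := by
  set D : Set E := ball 0 (2 * R) \ ball 0 R
  have hηG := (integrable_sq_mul_energyDensity (μ := μ) hA hΦ hw hη).integrableOn (s := D)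
  have hgη := (hg.integrable_mul_norm_gradient_sq hη).integrableOn (s := D)
  have hsum : IntegrableOn
      (fun x => t * (η x ^ 2 * energyDensity A Φ w x) + g x * ‖∇ η x‖ ^ 2 / t) D μ :=
    (hηG.const_mul t).add (hgη.div_const t)
  calc ∫ x, η x ^ 2 * energyDensity A Φ w x ∂μ
      = ∫ x, -crossTerm A Φ w η x ∂μ := hw'.integral_sq_mul_energyDensity hA hΦ hw hη
    _ = ∫ x in D, -crossTerm A Φ w η x ∂μ :=
        (setIntegral_eq_integral_of_forall_compl_eq_zero fun x hx => by
          rw [crossTerm_eq_zero_of_notMem_annulus hη hx, neg_zero]).symm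
    _ ≤ ∫ x in D, (t * (η x ^ 2 * energyDensity A Φ w x) + g x * ‖∇ η x‖ ^ 2 / t) ∂μ :=
        setIntegral_mono (integrable_crossTerm hA hΦ hw hη).neg.integrableOn hsum
          fun x => hg.neg_crossTerm_le hA hΦ' ht x
    _ = t * ∫ x in D, η x ^ 2 * energyDensity A Φ w x ∂μ
        + (∫ x in D, g x * ‖∇ η x‖ ^ 2 ∂μ) / t := by
        rw [integral_add (hηG.const_mul t) (hgη.div_const t), integral_const_mul, integral_div]
    _ ≤ _ := by
        gcongr
        exact hg.setIntegral_annulus_le hR hη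

lemma setIntegral_ball_energyDensity_le_integral_sq_mul (hA : IsDegenerateElliptic A)
    (hΦ : ContDiff ℝ 1 Φ) (hΦ' : ∀ s, 0 < deriv Φ s) (hw : ContDiff ℝ 1 w)
    (hη : IsCutoff C R η) :
    ∫ x in ball 0 R, energyDensity A Φ w x ∂μ ≤ ∫ x, η x ^ 2 * energyDensity A Φ w x ∂μ := by
  calc ∫ x in ball 0 R, energyDensity A Φ w x ∂μ
      = ∫ x in ball 0 R, η x ^ 2 * energyDensity A Φ w x ∂μ :=
        setIntegral_congr_fun measurableSet_ball fun x hx => by simp [hη.eq_one x hx]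
    _ ≤ _ := setIntegral_le_integral (integrable_sq_mul_energyDensity hA hΦ hw hη)
        (.of_forall fun x => mul_nonneg (sq_nonneg _) (energyDensity_nonneg hA hΦ' x))

lemma IsWeakSolution.setIntegral_ball_energyDensity_le (hw' : IsWeakSolution μ A w)
    (hA : IsDegenerateElliptic A) (hΦ : ContDiff ℝ 1 Φ) (hΦ' : ∀ s, 0 < deriv Φ s)
    (hw : ContDiff ℝ 1 w) (hg : IsQuadraticMajorant μ A Φ w g K) (hR : 0 < R)
    (hη : IsCutoff C R η) :
    ∫ x in ball 0 R, energyDensity A Φ w x ∂μ ≤ 16 * (C ^ 2 * K) := by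
  have hball := setIntegral_ball_energyDensity_le_integral_sq_mul (μ := μ) hA hΦ hΦ' hw hη
  have habsorb : ∫ x in ball 0 (2 * R) \ ball 0 R, η x ^ 2 * energyDensity A Φ w x ∂μ
      ≤ ∫ x, η x ^ 2 * energyDensity A Φ w x ∂μ :=
    setIntegral_le_integral (integrable_sq_mul_energyDensity hA hΦ hw hη)
      (.of_forall fun x => mul_nonneg (sq_nonneg _) (energyDensity_nonneg hA hΦ' x))
  have hcacc := hw'.integral_sq_mul_energyDensity_le hA hΦ hΦ' hw hg hR hη one_half_pos
  linarith

lemma IsWeakSolution.setIntegral_ball_energyDensity_le_sub (hw' : IsWeakSolution μ A w)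
    (hA : IsDegenerateElliptic A) (hΦ : ContDiff ℝ 1 Φ) (hΦ' : ∀ s, 0 < deriv Φ s)
    (hw : ContDiff ℝ 1 w) (hg : IsQuadraticMajorant μ A Φ w g K) (hR : 0 < R)
    (hη : IsCutoff C R η) (ht : 0 < t) :
    ∫ x in ball 0 R, energyDensity A Φ w x ∂μ
      ≤ t * (∫ x in ball 0 (2 * R), energyDensity A Φ w x ∂μ
          - ∫ x in ball 0 R, energyDensity A Φ w x ∂μ) + 4 * (C ^ 2 * K) / t := by
  have hG := integrableOn_ball_energyDensity (μ := μ) hA hΦ hw (2 * R)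
  have hannulus : ∫ x in ball 0 (2 * R) \ ball 0 R, η x ^ 2 * energyDensity A Φ w x ∂μ
      ≤ ∫ x in ball 0 (2 * R) \ ball 0 R, energyDensity A Φ w x ∂μ :=
    setIntegral_mono (integrable_sq_mul_energyDensity hA hΦ hw hη).integrableOn
      (hG.mono_set Set.sdiff_subset) fun x => mul_le_of_le_one_left
        (energyDensity_nonneg hA hΦ' x) (pow_le_one₀ (hη.nonneg x) (hη.le_one x))
  rw [← setIntegral_sdiff measurableSet_ball hG (ball_subset_ball (by linarith))]
  refine (setIntegral_ball_energyDensity_le_integral_sq_mul hA hΦ hΦ' hw hη).trans ?_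
  refine (hw'.integral_sq_mul_energyDensity_le hA hΦ hΦ' hw hg hR hη ht).trans ?_
  gcongr

lemma eq_zero_of_le_mul_sub_add_div {b : ℕ → ℝ} (hb : Monotone b) (hb₀ : ∀ n, 0 ≤ b n)
    (hbdd : BddAbove (Set.range b)) {K : ℝ}
    (hrec : ∀ n, ∀ t > 0, b n ≤ t * (b (n + 1) - b n) + K / t) (n : ℕ) : b n = 0 := by
  have hlim := tendsto_atTop_ciSup hb hbdd
  set L := ⨆ n, b n
  have hL_le : ∀ t > 0, L ≤ K / t := fun t ht => by
    have hrhs := ((((Filter.tendsto_add_atTop_iff_nat 1).2 hlim).sub hlim).const_mul t).add_const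
      (K / t)
    simpa using le_of_tendsto_of_tendsto' hlim hrhs fun n => hrec n t ht
  have hL : L ≤ 0 :=
    ge_of_tendsto (tendsto_const_nhds.div_atTop Filter.tendsto_id)
      ((Filter.eventually_gt_atTop 0).mono hL_le)
  exact le_antisymm ((le_ciSup hbdd n).trans hL) (hb₀ n)

theorem IsWeakSolution.apply_gradient_gradient_eq_zero [μ.IsOpenPosMeasure]
    (hw' : IsWeakSolution μ A w) (hA : IsDegenerateElliptic A) (hΦ : ContDiff ℝ 1 Φ)
    (hΦ' : ∀ s, 0 < deriv Φ s) (hw : ContDiff ℝ 1 w) (hg : IsQuadraticMajorant μ A Φ w g K)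
    (x : E) : A x (∇ w x) (∇ w x) = 0 := by
  have hG₀ : ∀ x, 0 ≤ energyDensity A Φ w x := energyDensity_nonneg hA hΦ'
  have hGball := integrableOn_ball_energyDensity (μ := μ) hA hΦ hw
  obtain ⟨C, hC⟩ := exists_forall_isCutoff (E := E)
  have hdyadic : ∀ n : ℕ, ∫ x in ball 0 (2 ^ n), energyDensity A Φ w x ∂μ = 0 := by
    refine eq_zero_of_le_mul_sub_add_div (K := 4 * (C ^ 2 * K)) (fun m n hmn => ?_)
      (fun n => integral_nonneg hG₀) ⟨16 * (C ^ 2 * K), ?_⟩ fun n t ht => ?_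
    · exact setIntegral_mono_set (hGball _) (.of_forall hG₀)
        (ball_subset_ball (pow_le_pow_right₀ one_le_two hmn)).eventuallyLE
    · rintro _ ⟨n, rfl⟩
      obtain ⟨η, hη⟩ := hC (2 ^ n) (by positivity)
      exact hw'.setIntegral_ball_energyDensity_le hA hΦ hΦ' hw hg (by positivity) hη
    · obtain ⟨η, hη⟩ := hC (2 ^ n) (by positivity)
      rw [pow_succ' 2 n]
      exact hw'.setIntegral_ball_energyDensity_le_sub hA hΦ hΦ' hw hg (by positivity) hη ht
  obtain ⟨n, hn⟩ := pow_unbounded_of_one_lt ‖x‖ one_lt_two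
  have hae := (setIntegral_eq_zero_iff_of_nonneg_ae (.of_forall hG₀) (hGball _)).1 (hdyadic n)
  have hx : energyDensity A Φ w x = 0 := Measure.eqOn_open_of_ae_eq hae isOpen_ball
    (continuous_energyDensity hA hΦ hw).continuousOn continuousOn_const (mem_ball_zero_iff.2 hn)
  exact (mul_eq_zero.1 hx).resolve_left (hΦ' _).ne'

end Liouville

section Weight

variable {ρ : ℝ → ℝ}

lemma mem_Ici_one_add_sq (s : ℝ) : 1 + s ^ 2 ∈ Set.Ici (1 : ℝ) :=
  le_add_of_nonneg_right (sq_nonneg s)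

lemma continuous_comp_one_add_sq (hρ : ContDiffOn ℝ 1 ρ (Set.Ici 1)) :
    Continuous fun s : ℝ => ρ (1 + s ^ 2) :=
  hρ.continuousOn.comp_continuous (by fun_prop) mem_Ici_one_add_sq

lemma continuous_derivWithin_comp_one_add_sq (hρ : ContDiffOn ℝ 1 ρ (Set.Ici 1)) :
    Continuous fun s : ℝ => derivWithin ρ (Set.Ici 1) (1 + s ^ 2) :=
  (hρ.continuousOn_derivWithin (uniqueDiffOn_Ici 1) le_rfl).comp_continuous (by fun_prop)
    mem_Ici_one_add_sq

lemma hasDerivAt_comp_one_add_sq (hρ : ContDiffOn ℝ 1 ρ (Set.Ici 1)) (s : ℝ) :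
    HasDerivAt (fun s => ρ (1 + s ^ 2)) (derivWithin ρ (Set.Ici 1) (1 + s ^ 2) * (2 * s)) s := by
  have hΓ : HasDerivAt (fun s : ℝ => 1 + s ^ 2) (2 * s) s := by
    simpa using (hasDerivAt_pow 2 s).const_add 1
  have hρΓ := (hρ.differentiableOn one_ne_zero _ (mem_Ici_one_add_sq s)).hasDerivWithinAt
  rw [← hasDerivWithinAt_univ]
  exact hρΓ.comp s hΓ.hasDerivWithinAt fun y _ => mem_Ici_one_add_sq y

lemma contDiffOn_div_sqrt (hρ : ContDiffOn ℝ 1 ρ (Set.Ici 1)) :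
    ContDiffOn ℝ 1 (fun t => ρ t / √t) (Set.Ici 1) := by
  have hpos : ∀ t ∈ Set.Ici (1 : ℝ), 0 < t := fun t ht => one_pos.trans_le ht
  exact hρ.div (contDiffOn_id.sqrt fun t ht => (hpos t ht).ne') fun t ht =>
    (Real.sqrt_pos.2 (hpos t ht)).ne'

lemma two_mul_sqrt_mul_derivWithin (hρ : ContDiffOn ℝ 1 ρ (Set.Ici 1)) {t : ℝ} (ht : 1 ≤ t) :
    2 * √t * derivWithin ρ (Set.Ici 1) t
      = ρ t / √t + 2 * t * derivWithin (fun s => ρ s / √s) (Set.Ici 1) t := by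
  have ht₀ : 0 < t := one_pos.trans_le ht
  have hsqrt₀ : 0 < √t := Real.sqrt_pos.2 ht₀
  have hρt := (hρ.differentiableOn one_ne_zero t ht).hasDerivWithinAt
  have hsqrt := (Real.hasDerivAt_sqrt ht₀.ne').hasDerivWithinAt (s := Set.Ici 1)
  rw [(hρt.fun_div hsqrt hsqrt₀.ne').derivWithin (uniqueDiffOn_Ici 1 t ht), Real.sq_sqrt ht₀.le]
  field_simp
  rw [Real.sq_sqrt ht₀.le]
  ring

/-- The function `s ↦ s ρ(Γ) / √Γ` with `Γ = 1 + s²`: applied to `∂ₑu` and multiplied by the square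
of a cutoff, it gives the test function for the equation solved by `∂ₑu`. -/
def testFun (ρ : ℝ → ℝ) (s : ℝ) : ℝ := s * (ρ (1 + s ^ 2) / √(1 + s ^ 2))

lemma hasDerivAt_testFun (hρ : ContDiffOn ℝ 1 ρ (Set.Ici 1)) (s : ℝ) :
    HasDerivAt (testFun ρ) (2 * √(1 + s ^ 2) * derivWithin ρ (Set.Ici 1) (1 + s ^ 2)
      - 2 * derivWithin (fun t => ρ t / √t) (Set.Ici 1) (1 + s ^ 2)) s := by
  refine ((hasDerivAt_id s).mul
    (hasDerivAt_comp_one_add_sq (contDiffOn_div_sqrt hρ) s)).congr_deriv ?_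
  rw [two_mul_sqrt_mul_derivWithin hρ (mem_Ici_one_add_sq s), id]
  ring

lemma contDiff_testFun (hρ : ContDiffOn ℝ 1 ρ (Set.Ici 1)) : ContDiff ℝ 1 (testFun ρ) := by
  refine contDiff_one_iff_deriv.2 ⟨fun s => (hasDerivAt_testFun hρ s).differentiableAt, ?_⟩
  rw [funext fun s => (hasDerivAt_testFun hρ s).deriv]
  have hρ₁ := continuous_derivWithin_comp_one_add_sq hρ
  have hσ₁ := continuous_derivWithin_comp_one_add_sq (contDiffOn_div_sqrt hρ)
  fun_prop

lemma two_mul_sqrt_mul_derivWithin_le_deriv_testFun (hρ : ContDiffOn ℝ 1 ρ (Set.Ici 1))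
    (hmono : ∀ t, 1 ≤ t → derivWithin (fun s => ρ s / √s) (Set.Ici 1) t ≤ 0) (s : ℝ) :
    2 * √(1 + s ^ 2) * derivWithin ρ (Set.Ici 1) (1 + s ^ 2) ≤ deriv (testFun ρ) s := by
  rw [(hasDerivAt_testFun hρ s).deriv]
  linarith [hmono _ (mem_Ici_one_add_sq s)]

lemma deriv_testFun_pos (hρ : ContDiffOn ℝ 1 ρ (Set.Ici 1))
    (hρ' : ∀ t, 1 ≤ t → 0 < derivWithin ρ (Set.Ici 1) t)
    (hmono : ∀ t, 1 ≤ t → derivWithin (fun s => ρ s / √s) (Set.Ici 1) t ≤ 0) (s : ℝ) :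
    0 < deriv (testFun ρ) s := by
  have := hρ' _ (mem_Ici_one_add_sq s)
  exact lt_of_lt_of_le (by positivity) (two_mul_sqrt_mul_derivWithin_le_deriv_testFun hρ hmono s)

/-- The integrand `Γ⁻¹ ρ(Γ)² / ρ'(Γ)`, where `Γ = 1 + s²`, of the growth condition on `s = ∂ₑu`. -/
def growthIntegrand (ρ : ℝ → ℝ) (s : ℝ) : ℝ :=
  (1 + s ^ 2)⁻¹ * ρ (1 + s ^ 2) ^ 2 / derivWithin ρ (Set.Ici 1) (1 + s ^ 2)

lemma growthIntegrand_nonneg (hρ' : ∀ t, 1 ≤ t → 0 < derivWithin ρ (Set.Ici 1) t) (s : ℝ) :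
    0 ≤ growthIntegrand ρ s := by
  have := hρ' _ (mem_Ici_one_add_sq s)
  unfold growthIntegrand
  positivity

lemma continuous_growthIntegrand (hρ : ContDiffOn ℝ 1 ρ (Set.Ici 1))
    (hρ' : ∀ t, 1 ≤ t → 0 < derivWithin ρ (Set.Ici 1) t) : Continuous (growthIntegrand ρ) := by
  have hΓ : Continuous fun s : ℝ => (1 + s ^ 2)⁻¹ :=
    Continuous.inv₀ (by fun_prop) fun s => by positivity
  exact (hΓ.mul ((continuous_comp_one_add_sq hρ).pow 2)).div
    (continuous_derivWithin_comp_one_add_sq hρ) fun s => (hρ' _ (mem_Ici_one_add_sq s)).ne'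

lemma testFun_sq_div_deriv_le (hρ : ContDiffOn ℝ 1 ρ (Set.Ici 1))
    (hρ' : ∀ t, 1 ≤ t → 0 < derivWithin ρ (Set.Ici 1) t)
    (hmono : ∀ t, 1 ≤ t → derivWithin (fun s => ρ s / √s) (Set.Ici 1) t ≤ 0) (s : ℝ) :
    testFun ρ s ^ 2 / deriv (testFun ρ) s ≤ √(1 + s ^ 2) * growthIntegrand ρ s := by
  have hΓ : 0 < 1 + s ^ 2 := by positivity
  have hd := hρ' _ (mem_Ici_one_add_sq s)
  have hderiv := two_mul_sqrt_mul_derivWithin_le_deriv_testFun hρ hmono s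
  have hsq : testFun ρ s ^ 2 ≤ ρ (1 + s ^ 2) ^ 2 := by
    rw [testFun, mul_pow, div_pow, Real.sq_sqrt hΓ.le, mul_div_left_comm]
    exact mul_le_of_le_one_right (sq_nonneg _) (div_le_one_of_le₀ (by linarith) hΓ.le)
  calc testFun ρ s ^ 2 / deriv (testFun ρ) s
      ≤ ρ (1 + s ^ 2) ^ 2 / (√(1 + s ^ 2) * derivWithin ρ (Set.Ici 1) (1 + s ^ 2)) := by
        gcongr
        linarith [mul_pos (Real.sqrt_pos.2 hΓ) hd]
    _ = √(1 + s ^ 2) * growthIntegrand ρ s := by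
        rw [growthIntegrand]
        field_simp
        rw [Real.sq_sqrt hΓ.le, mul_comm]

lemma integral_le_toReal_mul_of_ofReal_inv_mul_lintegral_le {α : Type*} [MeasurableSpace α]
    {μ : Measure α} {g : α → ℝ} (hg : AEStronglyMeasurable g μ) (hg₀ : ∀ x, 0 ≤ g x) {M : ℝ≥0∞}
    (hM : M ≠ ⊤) {c : ℝ} (hc : 0 < c)
    (h : ENNReal.ofReal c⁻¹ * ∫⁻ x, ENNReal.ofReal (g x) ∂μ ≤ M) :
    ∫ x, g x ∂μ ≤ M.toReal * c := by
  have hreal := ENNReal.toReal_mono hM h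
  rwa [ENNReal.toReal_mul, ENNReal.toReal_ofReal (by positivity),
    ← integral_eq_lintegral_of_nonneg_ae (.of_forall hg₀) hg, inv_mul_le_iff₀ hc,
    mul_comm] at hreal

lemma setIntegral_ball_growthIntegrand_le {E : Type*} [NormedAddCommGroup E]
    [MeasurableSpace E] [OpensMeasurableSpace E] {μ : Measure E} {w : E → ℝ}
    (hρ : ContDiffOn ℝ 1 ρ (Set.Ici 1)) (hρ' : ∀ t, 1 ≤ t → 0 < derivWithin ρ (Set.Ici 1) t)
    (hw : Continuous w) {M : ℝ≥0∞} (hM : M ≠ ⊤)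
    (h : ∀ R > 0, ENNReal.ofReal (R ^ (-(2 : ℝ))) *
      ∫⁻ x in ball 0 R, ENNReal.ofReal (growthIntegrand ρ (w x)) ∂μ ≤ M) :
    ∀ R > 0, ∫ x in ball 0 R, growthIntegrand ρ (w x) ∂μ ≤ M.toReal * R ^ 2 := by
  intro R hR
  refine integral_le_toReal_mul_of_ofReal_inv_mul_lintegral_le
    ((continuous_growthIntegrand hρ hρ').comp hw).aestronglyMeasurable
    (fun x => growthIntegrand_nonneg hρ' _) hM (by positivity) ?_
  simpa only [Real.rpow_neg hR.le, Real.rpow_two] using! h R hR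

end Weight

section Equation

variable {E : Type*} [NormedAddCommGroup E] [InnerProductSpace ℝ E] {f u w : E → ℝ}

lemma isDegenerateElliptic_hessian_gradient [CompleteSpace E] (hf : ContDiff ℝ 2 f)
    (hu : ContDiff ℝ 1 u) (hconvex : ∀ p q, 0 ≤ hessian f p q q) :
    IsDegenerateElliptic fun x => hessian f (∇ u x) where
  continuous :=
    ((hf.fderiv_right (m := 1) le_rfl).continuous_fderiv one_ne_zero).comp
      (contDiff_gradient hu (zero_add 1).le).continuous
  symm x := hessian_symm hf (∇ u x)
  nonneg x := hconvex (∇ u x)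

lemma isQuadraticMajorant_growthIntegrand [MeasurableSpace E] [OpensMeasurableSpace E]
    {μ : Measure E} [IsLocallyFiniteMeasure μ] {A : E → E →L[ℝ] E →L[ℝ] ℝ} {ρ : ℝ → ℝ} {Λ M : ℝ}
    (hA : IsDegenerateElliptic A) (hw : Continuous w) (hΛ : 0 ≤ Λ)
    (hAw : ∀ x q, A x q q ≤ Λ / √(1 + w x ^ 2) * ‖q‖ ^ 2)
    (hρ : ContDiffOn ℝ 1 ρ (Set.Ici 1)) (hρ' : ∀ t, 1 ≤ t → 0 < derivWithin ρ (Set.Ici 1) t)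
    (hmono : ∀ t, 1 ≤ t → derivWithin (fun s => ρ s / √s) (Set.Ici 1) t ≤ 0)
    (hM : ∀ R > 0, ∫ x in ball 0 R, growthIntegrand ρ (w x) ∂μ ≤ M * R ^ 2) :
    IsQuadraticMajorant μ A (testFun ρ) w (fun x => Λ * growthIntegrand ρ (w x)) (Λ * M) where
  locallyIntegrable :=
    (((continuous_growthIntegrand hρ hρ').comp hw).const_mul Λ).locallyIntegrable
  nonneg x := mul_nonneg hΛ (growthIntegrand_nonneg hρ' _)
  sq_div_mul_le x q := by
    have hgrowth := growthIntegrand_nonneg hρ' (w x)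
    calc testFun ρ (w x) ^ 2 / deriv (testFun ρ) (w x) * A x q q
        ≤ √(1 + w x ^ 2) * growthIntegrand ρ (w x) * (Λ / √(1 + w x ^ 2) * ‖q‖ ^ 2) :=
          mul_le_mul (testFun_sq_div_deriv_le hρ hρ' hmono _) (hAw x q) (hA.nonneg x q)
            (by positivity)
      _ = Λ * growthIntegrand ρ (w x) * ‖q‖ ^ 2 := by field_simp
  setIntegral_ball_le R hR := by
    rw [integral_const_mul, mul_assoc]
    exact mul_le_mul_of_nonneg_left (hM R hR) hΛ

variable [FiniteDimensional ℝ E] {ι : Type*} [Fintype ι]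

lemma isWeakSolution_dirDeriv [MeasurableSpace E] [BorelSpace E] {μ : Measure E}
    [μ.IsAddHaarMeasure] (hf : ContDiff ℝ 2 f) (hu : ContDiff ℝ 2 u) (b : OrthonormalBasis ι ℝ E)
    (hdiv : ∀ x, ∑ i, fderiv ℝ (fun y => fderiv ℝ f (∇ u y) (b i)) x (b i) = 0) (e : E) :
    IsWeakSolution μ (fun x => hessian f (∇ u x)) (dirDeriv u e) := by
  intro ψ hψ hψc
  have hflux i : ContDiff ℝ 1 fun y => fderiv ℝ f (∇ u y) (b i) :=
    (contDiff_dirDeriv hf (b i)).comp (contDiff_gradient hu le_rfl)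
  rw [← integral_sum_fderiv_mul_fderiv_eq_zero (μ := μ) hflux hdiv hψ hψc e]
  refine integral_congr_ae (.of_forall fun x => ?_)
  dsimp only
  conv_lhs => rw [← b.sum_repr' (∇ ψ x)]
  simp only [map_sum, map_smul, smul_eq_mul, inner_gradient_right,
    fderiv_fderiv_gradient_apply hf hu, mul_comm, conj_trivial]

theorem gradient_dirDeriv_eq_zero [MeasurableSpace E] [BorelSpace E] {μ : Measure E}
    [μ.IsAddHaarMeasure] {ρ : ℝ → ℝ} {Λ M : ℝ} {e : E} (hf : ContDiff ℝ 2 f)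
    (hpos : ∀ p q, q ≠ 0 → 0 < hessian f p q q) (hΛ : 0 ≤ Λ)
    (hgrow : ∀ p q, hessian f p q q ≤ Λ / √(1 + ⟪p, e⟫_ℝ ^ 2) * ‖q‖ ^ 2)
    (hρ : ContDiffOn ℝ 1 ρ (Set.Ici 1)) (hρ' : ∀ t, 1 ≤ t → 0 < derivWithin ρ (Set.Ici 1) t)
    (hmono : ∀ t, 1 ≤ t → derivWithin (fun s => ρ s / √s) (Set.Ici 1) t ≤ 0)
    (hu : ContDiff ℝ 2 u) (b : OrthonormalBasis ι ℝ E)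
    (hdiv : ∀ x, ∑ i, fderiv ℝ (fun y => fderiv ℝ f (∇ u y) (b i)) x (b i) = 0)
    (hM : ∀ R > 0, ∫ x in ball 0 R, growthIntegrand ρ (dirDeriv u e x) ∂μ ≤ M * R ^ 2) (x : E) :
    ∇ (dirDeriv u e) x = 0 := by
  have hconvex : ∀ p q, 0 ≤ hessian f p q q := fun p q => by
    rcases eq_or_ne q 0 with rfl | hq
    exacts [by simp, (hpos p q hq).le]
  have hA := isDegenerateElliptic_hessian_gradient hf (hu.of_le one_le_two) hconvex
  have hw := contDiff_dirDeriv hu e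
  have hgrowth := isQuadraticMajorant_growthIntegrand hA hw.continuous hΛ
    (fun x q => by simpa only [inner_gradient_left] using hgrow (∇ u x) q) hρ hρ' hmono hM
  have henergy := (isWeakSolution_dirDeriv hf hu b hdiv e).apply_gradient_gradient_eq_zero hA
    (contDiff_testFun hρ) (deriv_testFun_pos hρ hρ' hmono) hw hgrowth x
  by_contra hne
  exact (hpos _ _ hne).ne' henergy

lemma gradient_dirDeriv_eq_zero_of_forall_ne (hf : ContDiff ℝ 2 f) (hu : ContDiff ℝ 2 u) {x : E}
    (hpos : ∀ q ≠ 0, 0 < hessian f (∇ u x) q q) (b : OrthonormalBasis ι ℝ E)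
    (hdiv : ∑ i, fderiv ℝ (fun y => fderiv ℝ f (∇ u y) (b i)) x (b i) = 0) {j : ι}
    (hne : ∀ i ≠ j, ∇ (dirDeriv u (b i)) x = 0) : ∇ (dirDeriv u (b j)) x = 0 := by
  set v := ∇ (dirDeriv u (b j)) x
  have hparallel : v = ⟪b j, v⟫_ℝ • b j := by
    conv_lhs => rw [← b.sum_repr' v]
    refine Fintype.sum_eq_single j fun i hi => ?_
    rw [real_inner_comm, inner_gradient_dirDeriv hu, hessian_symm hu, ← inner_gradient_dirDeriv hu,
      hne i hi, inner_zero_left, zero_smul]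
  have hflux : hessian f (∇ u x) v (b j) = 0 := by
    simp_rw [fderiv_fderiv_gradient_apply hf hu] at hdiv
    rwa [Fintype.sum_eq_single j fun i hi => by simp [hne i hi]] at hdiv
  by_contra hv
  refine (hpos v hv).ne' ?_
  conv_lhs => enter [2]; rw [hparallel]
  rw [map_smul, hflux, smul_zero]

lemma eq_add_fderiv_of_forall_gradient_dirDeriv_eq_zero (hu : ContDiff ℝ 2 u)
    (b : OrthonormalBasis ι ℝ E) (h : ∀ i x, ∇ (dirDeriv u (b i)) x = 0) (x : E) :
    u x = u 0 + fderiv ℝ u 0 x := by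
  have hhess (x) : fderiv ℝ (fderiv ℝ u) x = 0 := by
    refine ContinuousLinearMap.coe_injective (b.toBasis.ext fun i => ?_)
    ext q
    simp [← inner_gradient_dirDeriv hu, h]
  have hconst (x) : fderiv ℝ u x = fderiv ℝ u 0 :=
    is_const_of_fderiv_eq_zero ((hu.fderiv_right le_rfl).differentiable one_ne_zero) hhess x 0
  refine congr_fun (eq_of_fderiv_eq (hu.differentiable two_ne_zero)
    (g := fun x => u 0 + fderiv ℝ u 0 x) (by fun_prop) (fun y => ?_) 0 (by simp)) x
  rw [hconst y, fderiv_const_add, ContinuousLinearMap.fderiv]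

end Equation

lemma basisFun_eq_ee (i : Fin 2) : EuclideanSpace.basisFun (Fin 2) ℝ i = ee i :=
  EuclideanSpace.basisFun_apply _ _ i

lemma inner_ee (p : E2) (i : Fin 2) : ⟪p, ee i⟫_ℝ = p i := by
  rw [← basisFun_eq_ee, real_inner_comm, ← OrthonormalBasis.repr_apply_apply,
    EuclideanSpace.basisFun_repr]

lemma apply_eq_mul_apply_ee (L : E2 →L[ℝ] ℝ) (x : E2) : L x = L (ee 0) * x 0 + L (ee 1) * x 1 := by
  conv_lhs => rw [← (EuclideanSpace.basisFun (Fin 2) ℝ).sum_repr x]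
  simp only [map_add, map_smul, Fin.sum_univ_two, EuclideanSpace.basisFun_repr, basisFun_eq_ee,
    smul_eq_mul, mul_comm]

lemma hessian_apply_self (f : E2 → ℝ) (p q : E2) : hessian f p q q = Hess f p q := by
  simp [Hess, iteratedFDeriv_two_apply]

lemma Hess_le_div_sqrt_mul {f : E2 → ℝ} {Λ : ℝ} (hΛ : 0 ≤ Λ) {p : E2}
    (hgrow : ‖iteratedFDeriv ℝ 2 f p‖ ≤ Λ / (1 + ‖p‖)) (i : Fin 2) (q : E2) :
    Hess f p q ≤ Λ / √(1 + p i ^ 2) * ‖q‖ ^ 2 := by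
  have hsqrt : √(1 + p i ^ 2) ≤ 1 + ‖p‖ := by
    have hp : |p i| ≤ ‖p‖ := PiLp.norm_apply_le p i
    rw [Real.sqrt_le_left (by positivity)]
    nlinarith [abs_nonneg (p i), sq_abs (p i)]
  calc Hess f p q ≤ ‖iteratedFDeriv ℝ 2 f p‖ * ∏ j, ‖![q, q] j‖ :=
        (le_abs_self _).trans ((iteratedFDeriv ℝ 2 f p).le_opNorm _)
    _ = ‖iteratedFDeriv ℝ 2 f p‖ * ‖q‖ ^ 2 := by simp [Fin.prod_univ_two, pow_two]
    _ ≤ Λ / (1 + ‖p‖) * ‖q‖ ^ 2 := by gcongr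
    _ ≤ Λ / √(1 + p i ^ 2) * ‖q‖ ^ 2 := by gcongr

theorem statement17_general (f u : E2 → ℝ)
    (hf : ContDiff ℝ 2 f)
    (hpos : ∀ p q : E2, q ≠ 0 → 0 < Hess f p q)
    (i : Fin 2) (Λ : ℝ) (hΛ : 0 ≤ Λ)
    (hgrow : ∀ p q : E2, Hess f p q ≤ Λ / √(1 + p i ^ 2) * ‖q‖ ^ 2)
    (ρ : ℝ → ℝ) (hρ : ContDiffOn ℝ 1 ρ (Set.Ici 1))
    (hρ' : ∀ t, 1 ≤ t → 0 < derivWithin ρ (Set.Ici 1) t)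
    (hmono : ∀ t, 1 ≤ t → derivWithin (fun s => ρ s / √s) (Set.Ici 1) t ≤ 0)
    (hu : ContDiff ℝ 2 u) (heq : solves f u)
    (hcond : ∃ M : ℝ≥0∞, M < ⊤ ∧ ∀ R : ℝ, 0 < R →
      ENNReal.ofReal (R ^ (-(2 : ℝ))) *
        ∫⁻ x in ball (0 : E2) R, ENNReal.ofReal (growthIntegrand ρ (pd u i x)) ≤ M) :
    ∃ a b c : ℝ, ∀ x : E2, u x = a * x 0 + b * x 1 + c := by
  obtain ⟨M, hM, hcond⟩ := hcond
  have hball := setIntegral_ball_growthIntegrand_le hρ hρ' (contDiff_dirDeriv hu (ee i)).continuous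
    hM.ne hcond
  simp_rw [← hessian_apply_self] at hpos hgrow
  set B := EuclideanSpace.basisFun (Fin 2) ℝ
  have hB : ∀ j, B j = ee j := basisFun_eq_ee
  have hdiv : ∀ x, ∑ j, fderiv ℝ (fun y => fderiv ℝ f (∇ u y) (B j)) x (B j) = 0 := by
    simpa only [hB] using! heq
  have hi : ∀ x, ∇ (dirDeriv u (B i)) x = 0 :=
    gradient_dirDeriv_eq_zero (μ := volume) hf hpos hΛ (by simpa only [hB, inner_ee] using hgrow)
      hρ hρ' hmono hu B hdiv (by simpa only [hB] using! hball)
  have hall : ∀ j x, ∇ (dirDeriv u (B j)) x = 0 := fun j x => by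
    rcases eq_or_ne j i with rfl | hji
    · exact hi x
    · refine gradient_dirDeriv_eq_zero_of_forall_ne hf hu (hpos _) B (hdiv x) fun k hk => ?_
      rw [show k = i by omega]
      exact hi x
  refine ⟨fderiv ℝ u 0 (ee 0), fderiv ℝ u 0 (ee 1), u 0, fun x => ?_⟩
  rw [eq_add_fderiv_of_forall_gradient_dirDeriv_eq_zero hu B hall x, apply_eq_mul_apply_ee]
  ring

theorem statement17 (f u : E2 → ℝ)
    (hf : ContDiff ℝ 2 f)
    (hpos : ∀ p q : E2, q ≠ 0 → 0 < Hess f p q)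
    (Lam : ℝ) (hLam : 0 < Lam)
    (hgrow : ∀ p : E2, ‖iteratedFDeriv ℝ 2 f p‖ ≤ Lam / (1 + ‖p‖))
    (ρ : ℝ → ℝ) (hρC1 : ContDiffOn ℝ 1 ρ (Set.Ici 1))
    (hρpos : ∀ t : ℝ, 1 ≤ t → 0 < ρ t)
    (hρ' : ∀ t : ℝ, 1 ≤ t → 0 < derivWithin ρ (Set.Ici 1) t)
    (hρmono : ∀ t : ℝ, 1 ≤ t → derivWithin (fun s => ρ s / Real.sqrt s) (Set.Ici 1) t ≤ 0)
    (hu : ContDiff ℝ 2 u) (heq : solves f u)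
    (hcond : ∃ M : ℝ≥0∞, M < ⊤ ∧ ∀ R : ℝ, 0 < R →
      ENNReal.ofReal (R ^ (-(2:ℝ))) *
        ∫⁻ x in ball (0 : E2) R, ENNReal.ofReal
          ((1 + (pd u 0 x) ^ 2)⁻¹ * (ρ (1 + (pd u 0 x) ^ 2)) ^ 2 /
            derivWithin ρ (Set.Ici 1) (1 + (pd u 0 x) ^ 2)) ≤ M) :
    ∃ a b c : ℝ, ∀ x : E2, u x = a * x 0 + b * x 1 + c :=
  statement17_general f u hf hpos 0 Lam hLam.le (fun p => Hess_le_div_sqrt_mul hLam.le (hgrow p) 0)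
    ρ hρC1 hρ' hρmono hu heq hcond
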